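/- Suppose z, w in the first Weyl algebra A₁ satisfy [z,w] = 1 and z is homogeneous, i.e., z ∈ D_k for some k ∈ ℤ. Then either z = λq and w = μp + l(q) with λμ = -1 and l ∈ K[X], or z = λp and w = μq + l(p) with λμ = 1 and l ∈ K[X]. In particular, z and w generate A₁. -/

import Mathlib

/-- The defining relation of the first Weyl algebra: `p q = q p + 1`,
where `p` and `q` are the images of the generators `0` and `1`. -/
inductive WeylRel (K : Type) [Field K] :
    FreeAlgebra K (Fin 2) → FreeAlgebra K (Fin 2) → Prop
  | rel : WeylRel K (FreeAlgebra.ι K 0 * FreeAlgebra.ι K 1)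
      (FreeAlgebra.ι K 1 * FreeAlgebra.ι K 0 + 1)

/-- The first Weyl algebra `A₁` over `K`. -/
abbrev Weyl (K : Type) [Field K] := RingQuot (WeylRel K)

/-- The generator `p` of `A₁`. -/
noncomputable def Wp (K : Type) [Field K] : Weyl K :=
  RingQuot.mkAlgHom K (WeylRel K) (FreeAlgebra.ι K 0)

/-- The generator `q` of `A₁`. -/
noncomputable def Wq (K : Type) [Field K] : Weyl K :=
  RingQuot.mkAlgHom K (WeylRel K) (FreeAlgebra.ι K 1)

/-- The homogeneous component `D_t = span{p^i q^s : s - i = t}` of `A₁`. -/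
noncomputable def WeylD (K : Type) [Field K] (t : ℤ) : Submodule K (Weyl K) :=
  Submodule.span K {x | ∃ i s : ℕ, (s : ℤ) - (i : ℤ) = t ∧ x = Wp K ^ i * Wq K ^ s}


/-!
Write `θ = q p`. Since `ad θ` acts on `p ^ i q ^ s` as multiplication by `s - i`, the spaces `D_t`
are its eigenspaces and form a grading, so the component `v` of `w` of degree `-k` still satisfies
`[z, v] = 1`. If `k = m ≥ 0`, then `z = f(θ) q ^ m` and `v = p ^ m g(θ)`, hence `z v = H(θ)` and
`v z = H(θ + m)` with `H = f (X (X - 1) ⋯ (X - m + 1)) g`. As `θ` is transcendental (in the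
polynomial representation it has the eigenvectors `X ^ n`), `H(X + m) = H - 1`; this forces
`deg H = 1`, so `m = 1` and `f`, `g` are constants. Finally `w - v` commutes with `q`, hence is
killed by `x ↦ p [x, q]`; this operator multiplies `p ^ i q ^ s` by `i`, so its kernel is `K[q]`.
Negative degrees reduce to positive ones through `(p, q) ↦ (q, -p)`.
-/

open Polynomial

section Polynomial

variable {R : Type*} [CommRing R] [IsDomain R] [CharZero R]

theorem eq_C_of_taylor_eq_self {r : R} (hr : r ≠ 0) {f : R[X]} (hf : taylor r f = f) :
    f = C (f.eval 0) := by
  have hper : Function.Periodic (fun x => f.eval x) r := fun x => by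
    simpa only [hf] using (taylor_eval r f x).symm
  refine eq_of_infinite_eval_eq _ _ (Set.infinite_of_injective_forall_mem
    (f := fun n : ℕ => (n * r : R)) (fun a b hab => ?_) fun n => ?_)
  · exact_mod_cast mul_right_cancel₀ hr hab
  · simpa using hper.nat_mul_eq n

theorem natDegree_eq_one_of_taylor_eq_add_C {r c : R} (hc : c ≠ 0) {f : R[X]}
    (hf : taylor r f = f + C c) : f.natDegree = 1 := by
  have hr : r ≠ 0 := by
    rintro rfl
    simp [hc] at hf
  have hlin : taylor r (C r * f - C c * X) = C r * f - C c * X := by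
    rw [map_sub, taylor_mul, taylor_mul, taylor_C, taylor_C, taylor_X, hf]
    ring
  have hrf := sub_eq_iff_eq_add'.mp (eq_C_of_taylor_eq_self hr hlin)
  rw [← natDegree_C_mul hr, hrf]
  exact natDegree_linear hc

theorem eq_C_of_taylor_mul_descPochhammer_mul {f g : R[X]} {m : ℕ} {c : R} (hc : c ≠ 0)
    (h : taylor (m : R) (f * descPochhammer R m * g) = f * descPochhammer R m * g + C c) :
    m = 1 ∧ ∃ a b, f = C a ∧ g = C b ∧ a * b = c := by
  have hdeg := natDegree_eq_one_of_taylor_eq_add_C hc h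
  have hne : f * descPochhammer R m * g ≠ 0 := ne_zero_of_natDegree_gt (hdeg ▸ one_pos)
  have hm : m ≠ 0 := by
    rintro rfl
    simp [hc] at h
  rw [natDegree_mul (left_ne_zero_of_mul hne) (right_ne_zero_of_mul hne),
    natDegree_mul (left_ne_zero_of_mul (left_ne_zero_of_mul hne))
      (right_ne_zero_of_mul (left_ne_zero_of_mul hne)), descPochhammer_natDegree] at hdeg
  obtain rfl : m = 1 := by lia
  obtain ⟨a, rfl⟩ := natDegree_eq_zero.mp (show f.natDegree = 0 by lia)
  obtain ⟨b, rfl⟩ := natDegree_eq_zero.mp (show g.natDegree = 0 by lia)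
  refine ⟨rfl, a, b, rfl, rfl, ?_⟩
  simpa using congrArg (eval 0) h

end Polynomial

section Algebra

theorem semiconjBy_aeval {R A : Type*} [CommSemiring R] [Semiring A] [Algebra R A] {a x y : A}
    (h : SemiconjBy a x y) (f : R[X]) : SemiconjBy a (aeval x f) (aeval y f) := by
  induction f using Polynomial.induction_on' with
  | add f g hf hg => simpa only [map_add] using hf.add_right hg
  | monomial n c =>
    simpa only [aeval_monomial] using
      SemiconjBy.mul_right (Algebra.commutes c a).symm (h.pow_right n)

theorem adjoin_smul_smul_add_aeval {R A : Type*} [CommRing R] [Ring A] [Algebra R A] {a b : R}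
    (hab : IsUnit (a * b)) (x y : A) (f : R[X]) :
    Algebra.adjoin R {a • x, b • y + aeval x f} = Algebra.adjoin R {x, y} := by
  obtain ⟨ha, hb⟩ := IsUnit.mul_iff.mp hab
  have hf {S : Subalgebra R A} (hx : x ∈ S) : aeval x f ∈ S :=
    Algebra.adjoin_le (Set.singleton_subset_iff.mpr hx) (aeval_mem_adjoin_singleton R x)
  apply le_antisymm <;> rw [Algebra.adjoin_le_iff, Set.pair_subset_iff]
  · have hx : x ∈ Algebra.adjoin R {x, y} := Algebra.subset_adjoin (by simp)
    have hy : y ∈ Algebra.adjoin R {x, y} := Algebra.subset_adjoin (by simp)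
    exact ⟨Subalgebra.smul_mem _ hx a, add_mem (Subalgebra.smul_mem _ hy b)
      (hf hx)⟩
  · set S := Algebra.adjoin R {a • x, b • y + aeval x f}
    have hx : x ∈ S := (S.toSubmodule.smul_mem_iff_of_isUnit ha).mp
      (Algebra.subset_adjoin (by simp))
    have hby : b • y + aeval x f ∈ S := Algebra.subset_adjoin (by simp)
    have hy := (add_mem_cancel_right (hf hx)).mp hby
    exact ⟨hx, (S.toSubmodule.smul_mem_iff_of_isUnit hb).mp hy⟩

end Algebra

/-- A pair with `[p, q] = 1`, which is the defining relation of the first Weyl algebra; the order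
is significant, as `p` plays the role of `d/dq`. -/
def IsWeylPair {A : Type*} [Ring A] (p q : A) : Prop :=
  p * q - q * p = 1

namespace IsWeylPair

section Ring

variable {A : Type*} [Ring A] {p q : A}

theorem mul_eq (h : IsWeylPair p q) : p * q = q * p + 1 :=
  sub_eq_iff_eq_add'.mp h

theorem swap_neg (h : IsWeylPair p q) : IsWeylPair q (-p) := by
  rw [IsWeylPair, mul_neg, neg_mul, neg_sub_neg]
  exact h

theorem commute_sub {q' : A} (h : IsWeylPair p q) (h' : IsWeylPair p q') :
    Commute p (q' - q) := by
  rw [Commute, SemiconjBy, mul_sub, sub_mul, sub_eq_sub_iff_sub_eq_sub]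
  exact h'.trans h.symm

theorem pow_mul_sub_mul_pow (h : IsWeylPair p q) (n : ℕ) :
    p ^ n * q - q * p ^ n = n • p ^ (n - 1) := by
  induction n with
  | zero => simp
  | succ n ih =>
    calc p ^ (n + 1) * q - q * p ^ (n + 1)
        = p * (p ^ n * q - q * p ^ n) + (p * q - q * p) * p ^ n := by
          rw [pow_succ']; noncomm_ring
      _ = (n + 1) • p ^ n := by
          rw [ih, h, mul_smul_comm, one_mul, succ_nsmul]
          cases n <;> simp [pow_succ']

theorem semiconjBy_pow_left (h : IsWeylPair p q) (n : ℕ) :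
    SemiconjBy (p ^ n) (q * p) (q * p + n) := by
  induction n with
  | zero => simp
  | succ n ih =>
    have hp : SemiconjBy p (q * p) (q * p + 1) := by
      rw [SemiconjBy, ← mul_assoc, h.mul_eq]
    rw [pow_succ', Nat.cast_add_one, add_comm (n : A), ← add_assoc]
    exact (hp.add_right (Nat.cast_commute n p).symm).mul_left ih

end Ring

section CommRing

variable {R A : Type*} [CommRing R] [Ring A] [Algebra R A] {p q : A}

theorem semiconjBy_pow_left_aeval (h : IsWeylPair p q) (n : ℕ) (f : R[X]) :
    SemiconjBy (p ^ n) (aeval (q * p) f) (aeval (q * p) (taylor (n : R) f)) := by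
  simpa [taylor_apply, aeval_comp] using semiconjBy_aeval (h.semiconjBy_pow_left n) f

variable (R) in
theorem pow_right_mul_pow_left (h : IsWeylPair p q) (n : ℕ) :
    q ^ n * p ^ n = aeval (q * p) (descPochhammer R n) := by
  induction n with
  | zero => simp
  | succ n ih =>
    have hshift : p ^ n * (q * p - n) = q * p * p ^ n := by
      simpa using ((h.semiconjBy_pow_left n).sub_right (Nat.cast_commute n (p ^ n)).symm).eq
    calc q ^ (n + 1) * p ^ (n + 1) = q ^ n * (q * p * p ^ n) := by
          rw [pow_succ, pow_succ']; simp only [mul_assoc]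
      _ = q ^ n * p ^ n * (q * p - n) := by rw [← hshift, mul_assoc]
      _ = aeval (q * p) (descPochhammer R (n + 1)) := by
          simp [ih, descPochhammer_succ_right]

variable (R) in
theorem pow_left_mul_pow_right (h : IsWeylPair p q) (n : ℕ) :
    p ^ n * q ^ n = aeval (q * p) (taylor (n : R) (descPochhammer R n)) := by
  induction n with
  | zero => simp
  | succ n ih =>
    have hshift : p ^ n * (q * p + 1) = (q * p + n + 1) * p ^ n :=
      ((h.semiconjBy_pow_left n).add_right (.one_right (p ^ n))).eq
    calc p ^ (n + 1) * q ^ (n + 1) = p ^ n * (q * p + 1) * q ^ n := by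
          rw [pow_succ, pow_succ', ← h.mul_eq]; simp only [mul_assoc]
      _ = aeval (q * p) ((X + (n : R[X]) + 1) * taylor (n : R) (descPochhammer R n)) := by
          rw [hshift, mul_assoc, ih]
          simp
      _ = aeval (q * p) (taylor ((n + 1 : ℕ) : R) (descPochhammer R (n + 1))) := by
          rw [descPochhammer_succ_left, taylor_mul, taylor_X, taylor_apply, taylor_apply,
            comp_assoc]
          have hX : (X - 1 : R[X]).comp (X + C ((n + 1 : ℕ) : R)) = X + C (n : R) := by
            simp [sub_comp, ← add_assoc]
          rw [hX]
          simp [add_assoc]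

theorem aeval_mul_pow_mul_pow_mul_aeval (h : IsWeylPair p q) (f g : R[X]) (m : ℕ) :
    aeval (q * p) f * q ^ m * (p ^ m * aeval (q * p) g) =
      aeval (q * p) (f * descPochhammer R m * g) := by
  simp only [map_mul, ← h.pow_right_mul_pow_left R, mul_assoc]

theorem pow_mul_aeval_mul_aeval_mul_pow (h : IsWeylPair p q) (f g : R[X]) (m : ℕ) :
    p ^ m * aeval (q * p) g * (aeval (q * p) f * q ^ m) =
      aeval (q * p) (taylor (m : R) (f * descPochhammer R m * g)) := by
  calc p ^ m * aeval (q * p) g * (aeval (q * p) f * q ^ m)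
      = p ^ m * aeval (q * p) (g * f) * q ^ m := by simp only [map_mul, mul_assoc]
    _ = aeval (q * p) (taylor (m : R) (g * f)) * (p ^ m * q ^ m) := by
        rw [(h.semiconjBy_pow_left_aeval m (g * f)).eq, mul_assoc]
    _ = aeval (q * p) (taylor (m : R) (f * descPochhammer R m * g)) := by
        rw [h.pow_left_mul_pow_right R, ← map_mul, ← taylor_mul]
        congr 2
        ring

theorem eq_C_of_isWeylPair_aeval_mul_pow [IsDomain R] [CharZero R] (h : IsWeylPair p q)
    (hpq : Transcendental R (q * p)) {f g : R[X]} {m : ℕ}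
    (hfg : IsWeylPair (aeval (q * p) f * q ^ m) (p ^ m * aeval (q * p) g)) :
    m = 1 ∧ ∃ a b, f = C a ∧ g = C b ∧ a * b = -1 := by
  refine eq_C_of_taylor_mul_descPochhammer_mul (neg_ne_zero.mpr one_ne_zero)
    (transcendental_iff_injective.mp hpq ?_)
  have := hfg.mul_eq
  rw [h.aeval_mul_pow_mul_pow_mul_aeval, h.pow_mul_aeval_mul_aeval_mul_pow] at this
  simp [this]

theorem span_pow_mul_pow_eq_top (h : IsWeylPair p q) (hgen : Algebra.adjoin R {p, q} = ⊤) :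
    Submodule.span R (Set.range fun n : ℕ × ℕ => p ^ n.1 * q ^ n.2) = ⊤ := by
  set S := Submodule.span R (Set.range fun n : ℕ × ℕ => p ^ n.1 * q ^ n.2)
  have hmem (i s : ℕ) : p ^ i * q ^ s ∈ S := Submodule.subset_span ⟨(i, s), rfl⟩
  have hp : S ≤ S.comap (LinearMap.mulLeft R p) := Submodule.span_le.mpr <| by
    rintro _ ⟨⟨i, s⟩, rfl⟩
    simpa [← mul_assoc, ← pow_succ'] using hmem (i + 1) s
  have hq : S ≤ S.comap (LinearMap.mulLeft R q) := Submodule.span_le.mpr <| by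
    rintro _ ⟨⟨i, s⟩, rfl⟩
    have hcomm : q * (p ^ i * q ^ s) = p ^ i * q ^ (s + 1) - i • (p ^ (i - 1) * q ^ s) := by
      rw [← smul_mul_assoc, ← h.pow_mul_sub_mul_pow, pow_succ']
      noncomm_ring
    simpa [hcomm] using sub_mem (hmem i (s + 1)) (nsmul_mem (hmem (i - 1) s) i)
  rw [eq_top_iff, ← Algebra.top_toSubmodule, ← hgen, Algebra.adjoin_eq_span, Submodule.span_le]
  intro x hx
  induction hx using Submonoid.closure_induction_left with
  | one => simpa using hmem 0 0
  | mul_left x hx y _ hy =>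
    obtain rfl | rfl := hx
    · exact hp hy
    · exact hq hy

end CommRing

section IsDomain

variable {R A : Type*} [CommRing R] [IsDomain R] [CharZero R] [Ring A] [Algebra R A]
  [Module.IsTorsionFree R A] {p q : A}

theorem mem_span_pow_of_commute (h : IsWeylPair p q) (hgen : Algebra.adjoin R {p, q} = ⊤)
    {x : A} (hx : Commute q x) : x ∈ Submodule.span R (Set.range (q ^ · : ℕ → A)) := by
  let T : Module.End R A :=
    LinearMap.mulLeft R p ∘ₗ (LinearMap.mulRight R q - LinearMap.mulLeft R q)
  let V (i : ℕ) : Submodule R A := Submodule.span R (Set.range fun s : ℕ => p ^ i * q ^ s)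
  have hT (i s : ℕ) : T (p ^ i * q ^ s) = (i : R) • (p ^ i * q ^ s) := by
    calc T (p ^ i * q ^ s) = p * (p ^ i * q - q * p ^ i) * q ^ s := by
          simp only [T, LinearMap.comp_apply, LinearMap.sub_apply, LinearMap.mulLeft_apply,
            LinearMap.mulRight_apply, mul_sub, sub_mul, mul_assoc, ← pow_succ, ← pow_succ']
      _ = (i : R) • (p ^ i * q ^ s) := by
          rw [h.pow_mul_sub_mul_pow, Nat.cast_smul_eq_nsmul, mul_smul_comm, smul_mul_assoc]
          cases i <;> simp [pow_succ']
  have hV : V ≤ fun i : ℕ => T.eigenspace (i : R) := fun i => Submodule.span_le.mpr <| by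
    rintro _ ⟨s, rfl⟩
    exact Module.End.mem_eigenspace_iff.mpr (hT i s)
  have htop : ⨆ i, V i = ⊤ := by
    rw [eq_top_iff, ← h.span_pow_mul_pow_eq_top hgen, Submodule.span_le]
    rintro _ ⟨⟨i, s⟩, rfl⟩
    exact Submodule.mem_iSup_of_mem i (Submodule.subset_span ⟨s, rfl⟩)
  have hindep := T.eigenspaces_iSupIndep.comp (Nat.cast_injective (R := R))
  have hV0 := congrFun ((hindep.le_iff_eq_of_iSup_eq_top htop).mp hV) 0
  have hx0 : x ∈ T.eigenspace ((0 : ℕ) : R) := by simp [T, hx.eq]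
  simpa [V] using hV0.ge hx0

theorem exists_aeval_right_eq_of_commute (h : IsWeylPair p q)
    (hgen : Algebra.adjoin R {p, q} = ⊤) {x : A} (hx : Commute q x) :
    ∃ l : R[X], aeval q l = x := by
  suffices hle : Submodule.span R (Set.range (q ^ · : ℕ → A)) ≤
      LinearMap.range (aeval q).toLinearMap from hle (h.mem_span_pow_of_commute hgen hx)
  rw [Submodule.span_le]
  rintro _ ⟨s, rfl⟩
  exact ⟨X ^ s, by simp⟩

theorem exists_aeval_left_eq_of_commute (h : IsWeylPair p q)
    (hgen : Algebra.adjoin R {p, q} = ⊤) {x : A} (hx : Commute p x) :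
    ∃ l : R[X], aeval p l = x := by
  have hgen' : Algebra.adjoin R {q, -p} = ⊤ := by
    simpa [Set.pair_comm q, hgen] using
      adjoin_smul_smul_add_aeval (a := (1 : R)) (b := -1) (by simp) q p 0
  obtain ⟨l, rfl⟩ := h.swap_neg.exists_aeval_right_eq_of_commute hgen' hx.neg_left
  exact ⟨l.comp (-X), by simp [aeval_comp]⟩

end IsDomain

end IsWeylPair

theorem exists_mem_isWeylPair_of_mem {ι A σ : Type*} [DecidableEq ι] [AddGroup ι] [Ring A]
    [SetLike σ A] [AddSubgroupClass σ A] (𝒜 : ι → σ) [GradedRing 𝒜] {z w : A} {k : ι}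
    (hz : z ∈ 𝒜 k) (h : IsWeylPair z w) : ∃ v ∈ 𝒜 (-k), IsWeylPair z v := by
  refine ⟨_, (DirectSum.decompose 𝒜 w (-k)).2, ?_⟩
  have h0 := congrArg (fun x => (DirectSum.decompose 𝒜 x 0 : A)) h
  dsimp only at h0
  rw [DirectSum.decompose_sub, DirectSum.sub_apply, AddSubgroupClass.coe_sub,
    DirectSum.decompose_of_mem_same 𝒜 SetLike.GradedOne.one_mem] at h0
  have hl := DirectSum.coe_decompose_mul_add_of_left_mem 𝒜 (j := -k) (b := w) hz
  have hr := DirectSum.coe_decompose_mul_add_of_right_mem 𝒜 (i := -k) (a := w) hz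
  rw [add_neg_cancel] at hl
  rw [neg_add_cancel] at hr
  rwa [hl, hr] at h0

section Weyl

variable (K : Type) [Field K]

theorem isWeylPair_wp_wq : IsWeylPair (Wp K) (Wq K) := by
  have := RingQuot.mkAlgHom_rel K (WeylRel.rel (K := K))
  rw [map_mul, map_add, map_mul, map_one] at this
  exact sub_eq_of_eq_add' this

theorem adjoin_wp_wq : Algebra.adjoin K {Wp K, Wq K} = ⊤ := by
  have hgen : Set.range (FreeAlgebra.ι K : Fin 2 → _) =
      {FreeAlgebra.ι K 0, FreeAlgebra.ι K 1} := by
    ext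
    simp [Fin.exists_fin_two, eq_comm]
  have := congrArg (Subalgebra.map (RingQuot.mkAlgHom K (WeylRel K)))
    (FreeAlgebra.adjoin_range_ι K (Fin 2))
  rw [AlgHom.map_adjoin, hgen, Set.image_pair, Algebra.map_top,
    AlgHom.range_eq_top _ |>.mpr (RingQuot.mkAlgHom_surjective K (WeylRel K))] at this
  exact this

variable {K}

/-- The universal property of `A₁`: a pair with `[P, Q] = 1` in a `K`-algebra is the image of
`(p, q)` under an algebra homomorphism. -/
noncomputable def Weyl.lift {B : Type*} [Ring B] [Algebra K B] {P Q : B} (h : IsWeylPair P Q) :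
    Weyl K →ₐ[K] B :=
  RingQuot.liftAlgHom K ⟨FreeAlgebra.lift K ![P, Q], by
    rintro _ _ ⟨⟩
    simpa using h.mul_eq⟩

@[simp]
theorem Weyl.lift_wp {B : Type*} [Ring B] [Algebra K B] {P Q : B} (h : IsWeylPair P Q) :
    Weyl.lift h (Wp K) = P := by
  simp [Weyl.lift, Wp]

@[simp]
theorem Weyl.lift_wq {B : Type*} [Ring B] [Algebra K B] {P Q : B} (h : IsWeylPair P Q) :
    Weyl.lift h (Wq K) = Q := by
  simp [Weyl.lift, Wq]

theorem isWeylPair_derivative_mulLeft_X {R : Type*} [CommRing R] :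
    IsWeylPair (derivative : Module.End R R[X]) (LinearMap.mulLeft R X) :=
  LinearMap.ext fun f => by simp

theorem transcendental_wq_mul_wp [CharZero K] : Transcendental K (Wq K * Wp K) := by
  let ρ : Weyl K →ₐ[K] Module.End K K[X] := Weyl.lift isWeylPair_derivative_mulLeft_X
  have hρ (n : ℕ) : (ρ (Wq K * Wp K)).HasEigenvector (n : K) (X ^ n) := by
    rw [Module.End.hasEigenvector_iff, Module.End.mem_eigenspace_iff]
    refine ⟨?_, pow_ne_zero _ X_ne_zero⟩
    cases n with
    | zero => simp [ρ]
    | succ n =>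
      simp [ρ, smul_eq_C_mul]
      ring
  refine transcendental_iff.mpr fun f hf => eq_zero_of_infinite_isRoot f
    (Set.infinite_of_injective_forall_mem (Nat.cast_injective (R := K)) fun n => ?_)
  have := Module.End.aeval_apply_of_hasEigenvector (p := f) (hρ n)
  rw [aeval_algHom_apply, hf, map_zero, LinearMap.zero_apply] at this
  exact (smul_eq_zero.mp this.symm).resolve_right (pow_ne_zero _ X_ne_zero)

end Weyl

section Grading

attribute [local instance] LieRing.ofAssociativeRing

theorem gradedMonoid_eigenspace_ad {R A : Type*} [CommRing R] [Ring A] [Algebra R A] (a : A) :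
    SetLike.GradedMonoid (LieAlgebra.ad R A a).eigenspace where
  one_mem := by simp [Ring.lie_def]
  mul_mem μ ν x y hx hy := by
    simp only [Module.End.mem_eigenspace_iff, LieAlgebra.ad_apply, Ring.lie_def] at hx hy ⊢
    calc a * (x * y) - x * y * a = (a * x - x * a) * y + x * (a * y - y * a) := by noncomm_ring
      _ = (μ + ν) • (x * y) := by rw [hx, hy, smul_mul_assoc, mul_smul_comm, add_smul]

theorem IsWeylPair.pow_mul_pow_mem_eigenspace_ad {R A : Type*} [CommRing R] [Ring A]
    [Algebra R A] {p q : A} (h : IsWeylPair p q) (i s : ℕ) :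
    p ^ i * q ^ s ∈ (LieAlgebra.ad R A (q * p)).eigenspace ((s : R) - i) := by
  have hp : p ∈ (LieAlgebra.ad R A (q * p)).eigenspace (-1) := by
    simp [Ring.lie_def, ← mul_assoc, h.mul_eq, add_mul]
  have hq : q ∈ (LieAlgebra.ad R A (q * p)).eigenspace 1 := by
    simp [Ring.lie_def, mul_assoc, h.mul_eq, mul_add]
  have := gradedMonoid_eigenspace_ad (R := R) (q * p)
  convert SetLike.mul_mem_graded (SetLike.pow_mem_graded i hp) (SetLike.pow_mem_graded s hq)
    using 2
  simp [neg_add_eq_sub]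

variable {K : Type} [Field K]

theorem iSup_weylD : ⨆ t, WeylD K t = ⊤ := by
  rw [eq_top_iff, ← (isWeylPair_wp_wq K).span_pow_mul_pow_eq_top (adjoin_wp_wq K),
    Submodule.span_le]
  rintro _ ⟨⟨i, s⟩, rfl⟩
  exact Submodule.mem_iSup_of_mem _ (Submodule.subset_span ⟨i, s, rfl, rfl⟩)

theorem weylD_eq_eigenspace_ad [CharZero K] :
    WeylD K = fun t : ℤ => (LieAlgebra.ad K (Weyl K) (Wq K * Wp K)).eigenspace (t : K) := by
  have hindep := (LieAlgebra.ad K (Weyl K) (Wq K * Wp K)).eigenspaces_iSupIndep.comp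
    (Int.cast_injective (α := K))
  refine (hindep.le_iff_eq_of_iSup_eq_top iSup_weylD).mp fun t => Submodule.span_le.mpr ?_
  rintro _ ⟨i, s, rfl, rfl⟩
  simpa using (isWeylPair_wp_wq K).pow_mul_pow_mem_eigenspace_ad (R := K) i s

/-- The grading of `A₁` by the spaces `D_t`; since `D_t` is the `t`-eigenspace of `ad (q p)`, it is
a grading because `ad (q p)` is a derivation. -/
noncomputable instance Weyl.gradedAlgebra [CharZero K] : GradedAlgebra (WeylD K) :=
  have hmul : SetLike.GradedMonoid (WeylD K) := by
    have := gradedMonoid_eigenspace_ad (R := K) (Wq K * Wp K)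
    rw [weylD_eq_eigenspace_ad]
    exact {
      one_mem := by simpa using this.one_mem
      mul_mem := fun s t x y hx hy => by simpa using this.mul_mem hx hy }
  have hindep : iSupIndep (WeylD K) := by
    rw [weylD_eq_eigenspace_ad]
    exact (Module.End.eigenspaces_iSupIndep _).comp Int.cast_injective
  have hdecomp : DirectSum.IsInternal (WeylD K) :=
    DirectSum.isInternal_submodule_of_iSupIndep_of_iSup_eq_top hindep iSup_weylD
  { hmul, hdecomp.chooseDecomposition with }

theorem exists_eq_aeval_mul_pow_of_mem_weylD {m : ℕ} {x : Weyl K} (hx : x ∈ WeylD K m) :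
    ∃ f : K[X], x = aeval (Wq K * Wp K) f * Wq K ^ m := by
  suffices WeylD K m ≤ LinearMap.range
      (LinearMap.mulRight K (Wq K ^ m) ∘ₗ (aeval (Wq K * Wp K)).toLinearMap) by
    obtain ⟨f, rfl⟩ := this hx
    exact ⟨f, rfl⟩
  refine Submodule.span_le.mpr ?_
  rintro _ ⟨i, s, hs, rfl⟩
  obtain rfl : s = i + m := by lia
  exact ⟨_, by rw [pow_add, ← mul_assoc, (isWeylPair_wp_wq K).pow_left_mul_pow_right K]; rfl⟩

theorem exists_eq_pow_mul_aeval_of_mem_weylD_neg {m : ℕ} {x : Weyl K} (hx : x ∈ WeylD K (-m)) :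
    ∃ g : K[X], x = Wp K ^ m * aeval (Wq K * Wp K) g := by
  suffices WeylD K (-m) ≤ LinearMap.range
      (LinearMap.mulLeft K (Wp K ^ m) ∘ₗ (aeval (Wq K * Wp K)).toLinearMap) by
    obtain ⟨g, rfl⟩ := this hx
    exact ⟨g, rfl⟩
  refine Submodule.span_le.mpr ?_
  rintro _ ⟨i, s, hs, rfl⟩
  obtain rfl : i = m + s := by lia
  exact ⟨_, by rw [pow_add, mul_assoc, (isWeylPair_wp_wq K).pow_left_mul_pow_right K]; rfl⟩

theorem exists_eq_smul_of_isWeylPair_of_mem_weylD [CharZero K] {m : ℕ} {x y : Weyl K}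
    (hx : x ∈ WeylD K m) (hy : y ∈ WeylD K (-m)) (hxy : IsWeylPair x y) :
    ∃ a b : K, a * b = -1 ∧ x = a • Wq K ∧ y = b • Wp K := by
  obtain ⟨f, rfl⟩ := exists_eq_aeval_mul_pow_of_mem_weylD hx
  obtain ⟨g, rfl⟩ := exists_eq_pow_mul_aeval_of_mem_weylD_neg hy
  obtain ⟨rfl, a, b, rfl, rfl, hab⟩ :=
    (isWeylPair_wp_wq K).eq_C_of_isWeylPair_aeval_mul_pow transcendental_wq_mul_wp hxy
  exact ⟨a, b, hab, by simp [Algebra.smul_def], by simp [Algebra.smul_def, Algebra.commutes]⟩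

end Grading

/-- If `[z,w] = 1` and `z` is homogeneous (`z ∈ D_k`), then either `z = λq`,
`w = μp + l(q)` with `λμ = -1`, or `z = λp`, `w = μq + l(p)` with `λμ = 1`;
in particular `z` and `w` generate `A₁`. -/
theorem weyl_homogeneous_commutator_one (K : Type) [Field K] [CharZero K]
    (z w : Weyl K) (hc : z * w - w * z = 1) (k : ℤ) (hz : z ∈ WeylD K k) :
    ((∃ (lam μ : K) (l : Polynomial K), lam * μ = -1 ∧
        z = lam • Wq K ∧ w = μ • Wp K + Polynomial.aeval (Wq K) l) ∨
      (∃ (lam μ : K) (l : Polynomial K), lam * μ = 1 ∧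
        z = lam • Wp K ∧ w = μ • Wq K + Polynomial.aeval (Wp K) l)) ∧
      Algebra.adjoin K {z, w} = (⊤ : Subalgebra K (Weyl K)) := by
  obtain ⟨v, hv, hzv⟩ := exists_mem_isWeylPair_of_mem (WeylD K) hz hc
  have hcomm : Commute z (w - v) := hzv.commute_sub hc
  obtain ⟨m, rfl | rfl⟩ := k.eq_nat_or_neg
  · obtain ⟨a, b, hab, rfl, rfl⟩ := exists_eq_smul_of_isWeylPair_of_mem_weylD hz hv hzv
    have ha : a ≠ 0 := left_ne_zero_of_mul (hab ▸ neg_ne_zero.mpr one_ne_zero)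
    obtain ⟨l, hl⟩ := (isWeylPair_wp_wq K).exists_aeval_right_eq_of_commute (adjoin_wp_wq K)
      ((Commute.smul_left_iff₀ ha).mp hcomm)
    obtain rfl : w = b • Wp K + aeval (Wq K) l := by rw [hl, add_sub_cancel]
    refine ⟨Or.inl ⟨a, b, l, hab, rfl, rfl⟩, ?_⟩
    rw [adjoin_smul_smul_add_aeval (hab ▸ isUnit_one.neg), Set.pair_comm, adjoin_wp_wq]
  · obtain ⟨a, b, hab, rfl, hnegz⟩ :=
      exists_eq_smul_of_isWeylPair_of_mem_weylD (neg_neg (m : ℤ) ▸ hv) (neg_mem hz) hzv.swap_neg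
    obtain rfl : z = -b • Wp K :=
      (neg_eq_iff_eq_neg.mp hnegz).trans (neg_smul b _).symm
    have hba : -b * a = 1 := by rw [neg_mul, mul_comm, hab, neg_neg]
    obtain ⟨l, hl⟩ := (isWeylPair_wp_wq K).exists_aeval_left_eq_of_commute (adjoin_wp_wq K)
      ((Commute.smul_left_iff₀ (left_ne_zero_of_mul_eq_one hba)).mp hcomm)
    obtain rfl : w = a • Wq K + aeval (Wp K) l := by rw [hl, add_sub_cancel]
    refine ⟨Or.inr ⟨-b, a, l, hba, rfl, rfl⟩, ?_⟩
    rw [adjoin_smul_smul_add_aeval (hba ▸ isUnit_one), adjoin_wp_wq]
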